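/- Suppose H_A = C^d, Alice's measurement is the full Bell state measurement {M_a = (U_a ⊗ 1)Φ+(U_a† ⊗ 1)}_{a=0}^{d²−1} with {U_a} the Heisenberg–Weyl unitaries, and the input set {ω_x} is tomographically complete. Then the random teleportation robustness of the resulting assemblage equals the random entanglement robustness of the shared state: τ_r({σ_{a|ω_x}}) = ε_r(ρ^{AB}). -/

import Mathlib

open Matrix ComplexOrder
open scoped Kronecker

namespace Tele

noncomputable def ptrace₁ {V B : Type*} [Fintype V]
    (M : Matrix (V × B) (V × B) ℂ) : Matrix B B ℂ :=
  Matrix.of fun b b' => ∑ v, M (v, b) (v, b')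

noncomputable def ptrace₂ {V B : Type*} [Fintype B]
    (M : Matrix (V × B) (V × B) ℂ) : Matrix V V ℂ :=
  Matrix.of fun v v' => ∑ b, M (v, b) (v', b)

noncomputable def ptraceMid {V A B : Type*} [Fintype A]
    (M : Matrix (V × A × B) (V × A × B) ℂ) : Matrix (V × B) (V × B) ℂ :=
  Matrix.of fun p q => ∑ a, M (p.1, a, p.2) (q.1, a, q.2)

noncomputable def ptraceVA {V A B : Type*} [Fintype V] [Fintype A]
    (M : Matrix (V × A × B) (V × A × B) ℂ) : Matrix B B ℂ :=
  Matrix.of fun b b' => ∑ v, ∑ a, M (v, a, b) (v, a, b')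

noncomputable def ptraceV₁A {V V₁ A B : Type*} [Fintype V₁] [Fintype A]
    (M : Matrix (V × V₁ × A × B) (V × V₁ × A × B) ℂ) : Matrix (V × B) (V × B) ℂ :=
  Matrix.of fun p q => ∑ v₁, ∑ a, M (p.1, v₁, a, p.2) (q.1, v₁, a, q.2)

def ptranspose₁ {V B : Type*} (M : Matrix (V × B) (V × B) ℂ) : Matrix (V × B) (V × B) ℂ :=
  Matrix.of fun p q => M (q.1, p.2) (p.1, q.2)

def ptranspose₂ {V B : Type*} (M : Matrix (V × B) (V × B) ℂ) : Matrix (V × B) (V × B) ℂ :=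
  Matrix.of fun p q => M (p.1, q.2) (q.1, p.2)

def Separable {V B : Type*} [Fintype V] [Fintype B]
    (M : Matrix (V × B) (V × B) ℂ) : Prop :=
  ∃ (n : ℕ) (τ : Fin n → Matrix V V ℂ) (χ : Fin n → Matrix B B ℂ),
    (∀ i, (τ i).PosSemidef) ∧ (∀ i, (χ i).PosSemidef) ∧ M = ∑ i, τ i ⊗ₖ χ i

def IsState {V : Type*} [Fintype V] (ρ : Matrix V V ℂ) : Prop :=
  ρ.PosSemidef ∧ ρ.trace = 1

noncomputable def maxEnt (d : ℕ) : Matrix (Fin d × Fin d) (Fin d × Fin d) ℂ :=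
  Matrix.of fun p q => if p.1 = p.2 ∧ q.1 = q.2 then (d : ℂ)⁻¹ else 0

noncomputable def chanOp {V A B : Type*} [Fintype V] [Fintype A] [Fintype B]
    [DecidableEq V] [DecidableEq B]
    (M : Matrix (V × A) (V × A) ℂ) (ρ : Matrix (A × B) (A × B) ℂ) :
    Matrix (V × B) (V × B) ℂ :=
  ptraceMid ((Matrix.reindex (Equiv.prodAssoc V A B) (Equiv.prodAssoc V A B)
      (M ⊗ₖ (1 : Matrix B B ℂ))) * ((1 : Matrix V V ℂ) ⊗ₖ ρ))

noncomputable def teleA {V A B : Type*} [Fintype V] [Fintype A] [Fintype B] [DecidableEq B]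
    (M : Matrix (V × A) (V × A) ℂ) (ρ : Matrix (A × B) (A × B) ℂ) (ω : Matrix V V ℂ) :
    Matrix B B ℂ :=
  ptraceVA ((Matrix.reindex (Equiv.prodAssoc V A B) (Equiv.prodAssoc V A B)
      (M ⊗ₖ (1 : Matrix B B ℂ))) * (ω ⊗ₖ ρ))

noncomputable def margOp {V A : Type*} [Fintype V] [Fintype A] [DecidableEq V]
    (M : Matrix (V × A) (V × A) ℂ) (ρA : Matrix A A ℂ) : Matrix V V ℂ :=
  ptrace₂ (M * ((1 : Matrix V V ℂ) ⊗ₖ ρA))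

noncomputable def piOp {A B : Type*} [Fintype A] [Fintype B] [DecidableEq B]
    (χ : Matrix A A ℂ) (ρ : Matrix (A × B) (A × B) ℂ) : Matrix B B ℂ :=
  ptrace₁ ((χ ⊗ₖ (1 : Matrix B B ℂ)) * ρ)

def TomoComplete {V X : Type*} [Fintype V] (ω : X → Matrix V V ℂ) : Prop :=
  ∀ H : Matrix V V ℂ, H.IsHermitian → H ∈ Submodule.span ℝ (Set.range ω)

noncomputable def shiftX (d : ℕ) : Matrix (Fin d) (Fin d) ℂ :=
  Matrix.of fun i j => if (i : ℕ) = ((j : ℕ) + 1) % d then 1 else 0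

noncomputable def clockZ (d : ℕ) : Matrix (Fin d) (Fin d) ℂ :=
  Matrix.of fun i j =>
    if i = j then Complex.exp (2 * (Real.pi : ℂ) * Complex.I * ((i : ℕ) : ℂ) / (d : ℂ)) else 0

noncomputable def HW (d : ℕ) (a : Fin d × Fin d) : Matrix (Fin d) (Fin d) ℂ :=
  shiftX d ^ (a.1 : ℕ) * clockZ d ^ (a.2 : ℕ)

noncomputable def bellPOVM (d : ℕ) (a : Fin d × Fin d) :
    Matrix (Fin d × Fin d) (Fin d × Fin d) ℂ :=
  (HW d a ⊗ₖ (1 : Matrix (Fin d) (Fin d) ℂ)) * maxEnt d *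
    ((HW d a)ᴴ ⊗ₖ (1 : Matrix (Fin d) (Fin d) ℂ))

noncomputable def negativity {A B : Type*} [Fintype A] [Fintype B]
    (ρ : Matrix (A × B) (A × B) ℂ) : ℝ :=
  sInf {t : ℝ | ∃ ρp ρm : Matrix (A × B) (A × B) ℂ,
    ρ = ρp - ρm ∧ (ptranspose₁ ρp).PosSemidef ∧ (ptranspose₁ ρm).PosSemidef ∧
    t = (ρm.trace).re}

noncomputable def epsGen {A B : Type*} [Fintype A] [Fintype B]
    (ρ : Matrix (A × B) (A × B) ℂ) : ℝ :=
  sInf {r : ℝ | 0 ≤ r ∧ ∃ ρs : Matrix (A × B) (A × B) ℂ, IsState ρs ∧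
    Separable ((((1 + r : ℝ) : ℂ))⁻¹ • (ρ + ((r : ℝ) : ℂ) • ρs))}

noncomputable def epsSep {A B : Type*} [Fintype A] [Fintype B]
    (ρ : Matrix (A × B) (A × B) ℂ) : ℝ :=
  sInf {r : ℝ | 0 ≤ r ∧ ∃ ρs : Matrix (A × B) (A × B) ℂ, IsState ρs ∧ Separable ρs ∧
    Separable ((((1 + r : ℝ) : ℂ))⁻¹ • (ρ + ((r : ℝ) : ℂ) • ρs))}

noncomputable def epsR {A B : Type*} [Fintype A] [Fintype B] [DecidableEq A] [DecidableEq B]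
    (ρ : Matrix (A × B) (A × B) ℂ) : ℝ :=
  sInf {r : ℝ | 0 ≤ r ∧
    Separable ((((1 + r : ℝ) : ℂ))⁻¹ •
      (ρ + ((r : ℝ) : ℂ) • ((Fintype.card (A × B) : ℂ)⁻¹ • (1 : Matrix (A × B) (A × B) ℂ))))}

noncomputable def epsBSA {A B : Type*} [Fintype A] [Fintype B]
    (ρ : Matrix (A × B) (A × B) ℂ) : ℝ :=
  sInf {p : ℝ | 0 ≤ p ∧ p ≤ 1 ∧ ∃ ρs σS : Matrix (A × B) (A × B) ℂ,
    IsState ρs ∧ IsState σS ∧ Separable σS ∧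
    ρ = ((p : ℝ) : ℂ) • ρs + (((1 - p : ℝ)) : ℂ) • σS}

noncomputable def tauGen {V B X ι : Type*} [Fintype V] [Fintype B] [Fintype ι]
    [DecidableEq V] [DecidableEq B]
    (ω : X → Matrix V V ℂ) (σ : ι → X → Matrix B B ℂ) : ℝ :=
  sInf {r : ℝ | 0 ≤ r ∧ ∃ (m : ℕ) (ρs : Matrix (Fin m × B) (Fin m × B) ℂ)
      (N : ι → Matrix (V × Fin m) (V × Fin m) ℂ) (Ms : ι → Matrix (V × B) (V × B) ℂ),
      IsState ρs ∧ (∀ a, (N a).PosSemidef) ∧ ((∑ a, N a) = 1) ∧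
      (∀ a, (Ms a).PosSemidef ∧ Separable (Ms a)) ∧
      (∀ a x, (((1 + r : ℝ) : ℂ))⁻¹ • (σ a x + ((r : ℝ) : ℂ) • teleA (N a) ρs (ω x)) =
        ptrace₁ (Ms a * (ω x ⊗ₖ (1 : Matrix B B ℂ)))) ∧
      (∀ x, (∑ a, Ms a) = (1 : Matrix V V ℂ) ⊗ₖ
        ((((1 + r : ℝ) : ℂ))⁻¹ •
          ((∑ a, σ a x) + ((r : ℝ) : ℂ) • ∑ a, teleA (N a) ρs (ω x))))}

noncomputable def tauCl {V B X ι : Type*} [Fintype V] [Fintype B] [Fintype ι]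
    [DecidableEq V] [DecidableEq B]
    (ω : X → Matrix V V ℂ) (σ : ι → X → Matrix B B ℂ) : ℝ :=
  sInf {r : ℝ | 0 ≤ r ∧ ∃ (Mb Ms : ι → Matrix (V × B) (V × B) ℂ),
    (∀ a, (Mb a).PosSemidef ∧ Separable (Mb a)) ∧
    (∀ a, (Ms a).PosSemidef ∧ Separable (Ms a)) ∧
    (∀ x, (∑ a, Mb a) = (1 : Matrix V V ℂ) ⊗ₖ
      (∑ a, ptrace₁ (Mb a * (ω x ⊗ₖ (1 : Matrix B B ℂ))))) ∧
    (∀ a x, (((1 + r : ℝ) : ℂ))⁻¹ •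
        (σ a x + ((r : ℝ) : ℂ) • ptrace₁ (Mb a * (ω x ⊗ₖ (1 : Matrix B B ℂ)))) =
      ptrace₁ (Ms a * (ω x ⊗ₖ (1 : Matrix B B ℂ)))) ∧
    (∀ x, (∑ a, Ms a) = (1 : Matrix V V ℂ) ⊗ₖ
      ((((1 + r : ℝ) : ℂ))⁻¹ •
        ((∑ a, σ a x) + ((r : ℝ) : ℂ) •
          ∑ a, ptrace₁ (Mb a * (ω x ⊗ₖ (1 : Matrix B B ℂ))))))}

noncomputable def tauR {V B X ι : Type*} [Fintype V] [Fintype B] [Fintype ι]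
    [DecidableEq V] [DecidableEq B]
    (ω : X → Matrix V V ℂ) (σ : ι → X → Matrix B B ℂ) : ℝ :=
  sInf {r : ℝ | 0 ≤ r ∧ ∃ (p : ι → ℝ) (Ms : ι → Matrix (V × B) (V × B) ℂ),
    (∀ a, 0 ≤ p a) ∧ ((∑ a, p a) = 1) ∧
    (∀ a, (Ms a).PosSemidef ∧ Separable (Ms a)) ∧
    (∀ a x, (((1 + r : ℝ) : ℂ))⁻¹ •
        (σ a x + ((r * p a : ℝ) : ℂ) • ((Fintype.card B : ℂ)⁻¹ • (1 : Matrix B B ℂ))) =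
      ptrace₁ (Ms a * (ω x ⊗ₖ (1 : Matrix B B ℂ)))) ∧
    (∀ x, (∑ a, Ms a) = (1 : Matrix V V ℂ) ⊗ₖ
      ((((1 + r : ℝ) : ℂ))⁻¹ •
        ((∑ a, σ a x) + ((r : ℝ) : ℂ) • ((Fintype.card B : ℂ)⁻¹ • (1 : Matrix B B ℂ)))))}

noncomputable def TW {V B X ι : Type*} [Fintype V] [Fintype B] [Fintype ι]
    [DecidableEq B]
    (ω : X → Matrix V V ℂ) (σ : ι → X → Matrix B B ℂ) : ℝ :=
  sInf {p : ℝ | 0 ≤ p ∧ p ≤ 1 ∧ ∃ (Mt Mb : ι → Matrix (V × B) (V × B) ℂ),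
    (∀ a, (Mb a).PosSemidef ∧ Separable (Mb a)) ∧
    (∀ a, (ptranspose₁ (Mt a)).PosSemidef) ∧
    (∀ x x', (∑ a, ptrace₁ (Mt a * (ω x ⊗ₖ (1 : Matrix B B ℂ)))) =
      ∑ a, ptrace₁ (Mt a * (ω x' ⊗ₖ (1 : Matrix B B ℂ)))) ∧
    (∀ a x, σ a x = ptrace₁
      ((((p : ℝ) : ℂ) • Mt a + (((1 - p : ℝ)) : ℂ) • Mb a) * (ω x ⊗ₖ (1 : Matrix B B ℂ))))}

section Aux

set_option linter.unusedSectionVars false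

variable {B : Type*} [Fintype B] [DecidableEq B]

theorem sep_zero {V : Type*} [Fintype V] : Separable (0 : Matrix (V × B) (V × B) ℂ) :=
  ⟨0, Fin.elim0, Fin.elim0, fun i => i.elim0, fun i => i.elim0, by simp⟩

theorem sep_add {V : Type*} [Fintype V] {M N : Matrix (V × B) (V × B) ℂ}
    (hM : Separable M) (hN : Separable N) : Separable (M + N) := by
  obtain ⟨m, τ, χ, h1, h2, rfl⟩ := hM
  obtain ⟨n, τ', χ', h1', h2', rfl⟩ := hN
  refine ⟨m + n, Fin.append τ τ', Fin.append χ χ', ?_, ?_, ?_⟩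
  · intro i; refine Fin.addCases (fun i => ?_) (fun i => ?_) i <;> simp [h1, h1']
  · intro i; refine Fin.addCases (fun i => ?_) (fun i => ?_) i <;> simp [h2, h2']
  · simp [Fin.sum_univ_add]

theorem sep_sum {V ι : Type*} [Fintype V] (s : Finset ι) (M : ι → Matrix (V × B) (V × B) ℂ)
    (h : ∀ i, Separable (M i)) : Separable (∑ i ∈ s, M i) := by
  classical
  induction s using Finset.induction_on with
  | empty => simpa using sep_zero
  | insert a s ha ih => rw [Finset.sum_insert ha]; exact sep_add (h a) ih

theorem sep_smul {V : Type*} [Fintype V] {M : Matrix (V × B) (V × B) ℂ} {c : ℂ}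
    (hc : 0 ≤ c) (hM : Separable M) : Separable (c • M) := by
  obtain ⟨m, τ, χ, h1, h2, rfl⟩ := hM
  refine ⟨m, fun i => c • τ i, χ, fun i => (h1 i).smul hc, h2, ?_⟩
  simp [Finset.smul_sum, Matrix.smul_kronecker]

theorem sep_pt {V : Type*} [Fintype V] {M : Matrix (V × B) (V × B) ℂ}
    (hM : Separable M) : Separable (ptranspose₁ M) := by
  obtain ⟨m, τ, χ, h1, h2, rfl⟩ := hM
  refine ⟨m, fun i => (τ i)ᵀ, χ, fun i => (h1 i).transpose, h2, ?_⟩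
  ext p q
  simp [ptranspose₁, Matrix.sum_apply, Matrix.kroneckerMap_apply]

/-- local conjugation on the first factor. -/
noncomputable def conjA {V : Type*} [Fintype V] (W : Matrix V V ℂ)
    (M : Matrix (V × B) (V × B) ℂ) : Matrix (V × B) (V × B) ℂ :=
  (W ⊗ₖ (1 : Matrix B B ℂ)) * M * (Wᴴ ⊗ₖ (1 : Matrix B B ℂ))

theorem sep_conj {V : Type*} [Fintype V] (W : Matrix V V ℂ) {M : Matrix (V × B) (V × B) ℂ}
    (hM : Separable M) : Separable (conjA W M) := by
  obtain ⟨m, τ, χ, h1, h2, rfl⟩ := hM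
  refine ⟨m, fun i => W * τ i * Wᴴ, χ, fun i => (h1 i).mul_mul_conjTranspose_same W, h2, ?_⟩
  simp only [conjA, Finset.mul_sum, Finset.sum_mul, ← Matrix.mul_kronecker_mul, Matrix.one_mul,
    Matrix.mul_one]

theorem sep_psd {V : Type*} [Fintype V] {M : Matrix (V × B) (V × B) ℂ}
    (hM : Separable M) : M.PosSemidef := by
  classical
  obtain ⟨m, τ, χ, h1, h2, rfl⟩ := hM
  exact Matrix.posSemidef_sum _ fun i _ => (h1 i).kronecker (h2 i)

theorem conjA_apply {V : Type*} [Fintype V] (W : Matrix V V ℂ)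
    (M : Matrix (V × B) (V × B) ℂ) (v v' : V) (b b' : B) :
    conjA W M (v, b) (v', b') =
      ∑ α, ∑ α', W v α * star (W v' α') * M (α, b) (α', b') := by
  simp only [conjA, Matrix.mul_apply, Fintype.sum_prod_type, Matrix.kroneckerMap_apply,
    Matrix.one_apply, Matrix.conjTranspose_apply]
  simp [Finset.sum_mul]
  rw [Finset.sum_comm]
  refine Finset.sum_congr rfl fun _ _ => Finset.sum_congr rfl fun _ _ => ?_
  ring

theorem conjA_add {V : Type*} [Fintype V] (W : Matrix V V ℂ)
    (M N : Matrix (V × B) (V × B) ℂ) : conjA W (M + N) = conjA W M + conjA W N := by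
  simp [conjA, Matrix.mul_add, Matrix.add_mul]

theorem conjA_smul {V : Type*} [Fintype V] (W : Matrix V V ℂ) (c : ℂ)
    (M : Matrix (V × B) (V × B) ℂ) : conjA W (c • M) = c • conjA W M := by
  simp [conjA]

theorem conjA_one {V : Type*} [Fintype V] [DecidableEq V] (W : Matrix V V ℂ) (h : W * Wᴴ = 1) :
    conjA W (1 : Matrix (V × B) (V × B) ℂ) = 1 := by
  simp [conjA, ← Matrix.mul_kronecker_mul, h]

theorem conjA_conjA {V : Type*} [Fintype V] [DecidableEq V] (W : Matrix V V ℂ) (h : Wᴴ * W = 1)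
    (M : Matrix (V × B) (V × B) ℂ) : conjA Wᴴ (conjA W M) = M := by
  have : (Wᴴ ⊗ₖ (1 : Matrix B B ℂ)) * (W ⊗ₖ (1 : Matrix B B ℂ)) = 1 := by
    simp [← Matrix.mul_kronecker_mul, h]
  simp only [conjA, Matrix.conjTranspose_conjTranspose]
  rw [← Matrix.mul_assoc, ← Matrix.mul_assoc, this, Matrix.one_mul, Matrix.mul_assoc, this,
    Matrix.mul_one]

theorem pt_pt {V : Type*} (M : Matrix (V × B) (V × B) ℂ) : ptranspose₁ (ptranspose₁ M) = M := rfl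
theorem pt_add {V : Type*} (M N : Matrix (V × B) (V × B) ℂ) :
    ptranspose₁ (M + N) = ptranspose₁ M + ptranspose₁ N := rfl
theorem pt_smul {V : Type*} (c : ℂ) (M : Matrix (V × B) (V × B) ℂ) :
    ptranspose₁ (c • M) = c • ptranspose₁ M := rfl
theorem pt_one {V : Type*} [DecidableEq V] :
    ptranspose₁ (1 : Matrix (V × B) (V × B) ℂ) = 1 := by
  ext ⟨p, q⟩ ⟨p', q'⟩
  simp only [ptranspose₁, Matrix.of_apply, Matrix.one_apply, Prod.mk.injEq]
  congr 1
  rw [eq_comm (a := p')]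

theorem ptr_apply {V : Type*} [Fintype V] (M : Matrix (V × B) (V × B) ℂ) (H : Matrix V V ℂ)
    (b b' : B) : ptrace₁ (M * (H ⊗ₖ (1 : Matrix B B ℂ))) b b' =
      ∑ v, ∑ v', M (v, b) (v', b') * H v' v := by
  simp [ptrace₁, Matrix.mul_apply, Fintype.sum_prod_type, Matrix.kroneckerMap_apply,
    Matrix.one_apply]

theorem tomo_ext {V X : Type*} [Fintype V] (ω : X → Matrix V V ℂ)
    (h : TomoComplete ω) (M N : Matrix (V × B) (V × B) ℂ)
    (hMN : ∀ x, ptrace₁ (M * (ω x ⊗ₖ (1 : Matrix B B ℂ))) =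
      ptrace₁ (N * (ω x ⊗ₖ (1 : Matrix B B ℂ)))) : M = N := by
  classical
  let L : B → B → Matrix V V ℂ →ₗ[ℂ] ℂ := fun b b' =>
    { toFun := fun H => ∑ v, ∑ v', (M - N) (v, b) (v', b') * H v' v
      map_add' := by intro H K; simp [mul_add, Finset.sum_add_distrib]
      map_smul' := by
        intro c H
        simp only [Matrix.smul_apply, smul_eq_mul, RingHom.id_apply, Finset.mul_sum]
        refine Finset.sum_congr rfl fun _ _ => Finset.sum_congr rfl fun _ _ => ?_
        ring }
  have hω : ∀ b b' x, L b b' (ω x) = 0 := by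
    intro b b' x
    have := congrFun (congrFun (hMN x) b) b'
    rw [ptr_apply, ptr_apply] at this
    simp [L, sub_mul, this]
  have hH : ∀ b b' H, H.IsHermitian → L b b' H = 0 := by
    intro b b' H hH
    have := h H hH
    have hadd : ∀ x y, L b b' x = 0 → L b b' y = 0 → L b b' (x + y) = 0 := by
      intro x y hx hy; rw [map_add, hx, hy, add_zero]
    have hsm : ∀ (c : ℝ) x, L b b' x = 0 → L b b' (c • x) = 0 := by
      intro c x hx
      have : c • x = (c : ℂ) • x := by ext; simp
      rw [this, map_smul, hx, smul_zero]
    clear hH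
    induction this using Submodule.span_induction with
    | mem x hx => obtain ⟨y, rfl⟩ := hx; exact hω b b' y
    | zero => simp
    | add x y _ _ hx hy => exact hadd _ _ hx hy
    | smul c x _ hx => exact hsm c _ hx
  have hall : ∀ b b' H, L b b' H = 0 := by
    intro b b' H
    have := realPart_add_I_smul_imaginaryPart H
    rw [← this, map_add, map_smul, hH _ _ _ (realPart H).2, hH _ _ _ (imaginaryPart H).2]
    simp
  ext ⟨v, b⟩ ⟨v', b'⟩
  have := hall b b' (Matrix.single v' v 1)
  simp [L, Matrix.single_apply, ite_and, Finset.sum_ite_eq] at this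
  exact sub_eq_zero.1 this

theorem bell_apply (d : ℕ) (a : Fin d × Fin d) (v α v' α' : Fin d) :
    bellPOVM d a (v, α) (v', α') = (d : ℂ)⁻¹ * (HW d a v α * star (HW d a v' α')) := by
  simp only [bellPOVM, maxEnt, Matrix.mul_apply, Fintype.sum_prod_type, Matrix.kroneckerMap_apply,
    Matrix.one_apply, Matrix.conjTranspose_apply, Matrix.of_apply, ite_and]
  simp
  ring

theorem tele_eq (d : ℕ) (a : Fin d × Fin d) (ρ : Matrix (Fin d × B) (Fin d × B) ℂ)
    (H : Matrix (Fin d) (Fin d) ℂ) :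
    teleA (bellPOVM d a) ρ H =
      ptrace₁ (((d : ℂ)⁻¹ • conjA (HW d a) (ptranspose₁ ρ)) * (H ⊗ₖ (1 : Matrix B B ℂ))) := by
  ext b b'
  rw [ptr_apply]
  simp only [teleA, ptraceVA, Matrix.of_apply, Matrix.mul_apply, Fintype.sum_prod_type,
    Matrix.kroneckerMap_apply, Matrix.reindex_apply, Matrix.submatrix_apply,
    Equiv.prodAssoc_symm_apply, Matrix.one_apply, Matrix.smul_apply, conjA_apply, bell_apply,
    ptranspose₁, smul_eq_mul]
  simp [Finset.mul_sum, Finset.sum_mul]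
  refine Finset.sum_congr rfl fun v _ => ?_
  rw [Finset.sum_comm]
  refine Finset.sum_congr rfl fun v' _ => ?_
  refine Finset.sum_congr rfl fun _ _ => Finset.sum_congr rfl fun _ _ => ?_
  ring

theorem shiftX_pow (d : ℕ) (m : ℕ) (i j : Fin d) :
    (shiftX d ^ m) i j = if (i : ℕ) = ((j : ℕ) + m) % d then 1 else 0 := by
  induction m generalizing i j with
  | zero => simp [Matrix.one_apply, Nat.mod_eq_of_lt j.2, Fin.ext_iff]
  | succ m ih =>
    have hd : 0 < d := i.pos
    rw [pow_succ, Matrix.mul_apply]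
    simp only [ih]
    simp only [shiftX, Matrix.of_apply]
    rw [Finset.sum_eq_single (⟨((j : ℕ) + 1) % d, Nat.mod_lt _ hd⟩ : Fin d)]
    · simp [add_assoc, add_comm 1 m]
    · intro k _ hk
      rw [if_neg (c := (k : ℕ) = _)]
      · simp
      · intro h; exact hk (Fin.ext h)
    · simp

noncomputable def zeta (d : ℕ) : ℂ := Complex.exp (2 * (Real.pi : ℂ) * Complex.I / d)

theorem zeta_prim (d : ℕ) (hd : 1 ≤ d) : IsPrimitiveRoot (zeta d) d :=
  Complex.isPrimitiveRoot_exp d (by omega)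

theorem HW_apply (d : ℕ) (a : Fin d × Fin d) (i j : Fin d) :
    HW d a i j = (if (i : ℕ) = ((j : ℕ) + a.1) % d then 1 else 0) * zeta d ^ ((j : ℕ) * a.2) := by
  have : clockZ d = Matrix.diagonal (fun i : Fin d => zeta d ^ (i : ℕ)) := by
    ext i j
    simp only [clockZ, Matrix.of_apply, Matrix.diagonal_apply, zeta, ← Complex.exp_nat_mul]
    congr 2
    ring
  rw [HW, this, Matrix.diagonal_pow, Matrix.mul_diagonal, shiftX_pow]
  simp [pow_mul]

theorem zeta_star (d : ℕ) (hd : 1 ≤ d) (k : ℕ) : zeta d ^ k * star (zeta d ^ k) = 1 := by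
  have : ‖zeta d‖ = 1 := (zeta_prim d hd).norm'_eq_one (by omega)
  rw [Complex.star_def, Complex.mul_conj, Complex.normSq_eq_norm_sq]
  simp [this]

theorem HW_unitary (d : ℕ) (hd : 1 ≤ d) (a : Fin d × Fin d) : HW d a * (HW d a)ᴴ = 1 := by
  rw [mul_eq_one_comm]
  ext i k
  have hd' : 0 < d := hd
  rw [Matrix.mul_apply]
  simp only [Matrix.conjTranspose_apply, HW_apply, Matrix.one_apply]
  rw [Finset.sum_eq_single (⟨((i : ℕ) + a.1) % d, Nat.mod_lt _ hd'⟩ : Fin d)]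
  · by_cases h : i = k
    · subst h
      have := zeta_star d hd (i * a.2)
      rw [mul_comm] at this
      simpa using this
    · have : ¬ ((i : ℕ) + a.1) % d = ((k : ℕ) + a.1) % d := by
        intro h'
        have : (i : ℕ) ≡ k [MOD d] := Nat.ModEq.add_right_cancel' _ h'
        exact h (Fin.ext (Nat.ModEq.eq_of_lt_of_lt this i.2 k.2))
      simp [h, this]
  · intro l _ hl
    rw [if_neg]
    · simp
    · intro h; exact hl (Fin.ext h)
  · simp

theorem zeta_sum (d : ℕ) (hd : 1 ≤ d) (j l : Fin d) :
    ∑ n : Fin d, zeta d ^ ((j : ℕ) * n) * star (zeta d ^ ((l : ℕ) * n)) =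
      if j = l then (d : ℂ) else 0 := by
  split_ifs with h
  · subst h
    simp only [zeta_star d hd]; simp
  · have hs := zeta_star d hd
    set w := zeta d ^ (j : ℕ) * star (zeta d ^ (l : ℕ)) with hw
    have e : ∀ n : Fin d, zeta d ^ ((j : ℕ) * n) * star (zeta d ^ ((l : ℕ) * n)) = w ^ (n : ℕ) := by
      intro n; rw [hw, mul_pow, pow_mul, pow_mul, star_pow]
    simp only [e]
    rw [Fin.sum_univ_eq_sum_range (fun n => w ^ n) d]
    have hw1 : w ≠ 1 := by
      intro h1
      have : zeta d ^ (j : ℕ) = zeta d ^ (l : ℕ) := by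
        calc zeta d ^ (j : ℕ) = zeta d ^ (j : ℕ) * (zeta d ^ (l : ℕ) * star (zeta d ^ (l : ℕ))) := by
              rw [hs, mul_one]
          _ = w * zeta d ^ (l : ℕ) := by rw [hw]; ring
          _ = _ := by rw [h1, one_mul]
      exact h (Fin.ext ((zeta_prim d hd).pow_inj j.2 l.2 this))
    have hwd : w ^ d = 1 := by
      rw [hw, mul_pow, ← star_pow, ← pow_mul, ← pow_mul, mul_comm, pow_mul', pow_mul',
        (zeta_prim d hd).pow_eq_one]
      simp
    have := geom_sum_mul w d
    rw [hwd, sub_self] at this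
    exact (mul_eq_zero.1 this).resolve_right (sub_ne_zero.2 hw1)

theorem shift_sum (d : ℕ) (hd : 1 ≤ d) (i k j : Fin d) :
    ∑ m : Fin d, (if (i : ℕ) = ((j : ℕ) + m) % d then (1 : ℂ) else 0) *
      (if (k : ℕ) = ((j : ℕ) + m) % d then (1 : ℂ) else 0) = if i = k then 1 else 0 := by
  have hd' : 0 < d := hd
  rw [Finset.sum_eq_single (⟨((i : ℕ) + (d - j)) % d, Nat.mod_lt _ hd'⟩ : Fin d)]
  · have : ((j : ℕ) + ((i : ℕ) + (d - j)) % d) % d = i := by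
      rw [Nat.add_mod_mod, show (j : ℕ) + ((i : ℕ) + (d - j)) = i + d by omega]
      simp [Nat.mod_eq_of_lt i.2]
    simp [this, Fin.ext_iff, eq_comm]
  · intro m _ hm
    rw [if_neg]
    · simp
    · intro h
      apply hm
      apply Fin.ext
      simp only
      rw [h, Nat.mod_add_mod, show (j : ℕ) + m + (d - j) = m + d by omega]
      simp [Nat.mod_eq_of_lt m.2]
  · simp

theorem twirl (d : ℕ) (hd : 1 ≤ d) (i j k l : Fin d) :
    ∑ a : Fin d × Fin d, HW d a i j * star (HW d a k l) =
      if i = k ∧ j = l then (d : ℂ) else 0 := by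
  rw [Fintype.sum_prod_type]
  have : ∀ m n : Fin d, HW d (m, n) i j * star (HW d (m, n) k l) =
      ((if (i : ℕ) = ((j : ℕ) + m) % d then (1 : ℂ) else 0) *
      (if (k : ℕ) = ((l : ℕ) + m) % d then (1 : ℂ) else 0)) *
      (zeta d ^ ((j : ℕ) * n) * star (zeta d ^ ((l : ℕ) * n))) := by
    intro m n
    rw [HW_apply, HW_apply, star_mul, apply_ite star]
    simp only [star_one, star_zero]
    ring
  simp only [this]
  simp only [← Finset.mul_sum, zeta_sum d hd]
  rw [← Finset.sum_mul]
  by_cases h : j = l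
  · subst h
    rw [shift_sum d hd]
    by_cases h : i = k <;> simp [h]
  · simp [h]

theorem twirl_conj (d : ℕ) (hd : 1 ≤ d) (M : Matrix (Fin d × B) (Fin d × B) ℂ) :
    ∑ a, conjA (HW d a) M = (d : ℂ) • ((1 : Matrix (Fin d) (Fin d) ℂ) ⊗ₖ ptrace₁ M) := by
  ext ⟨v, b⟩ ⟨v', b'⟩
  rw [Matrix.sum_apply]
  simp only [conjA_apply]
  rw [Finset.sum_comm]
  have : ∀ α, ∑ a, ∑ α', HW d a v α * star (HW d a v' α') * M (α, b) (α', b') =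
      ∑ α', (if v = v' ∧ α = α' then (d : ℂ) else 0) * M (α, b) (α', b') := by
    intro α
    rw [Finset.sum_comm]
    simp only [← twirl d hd, Finset.sum_mul]
  simp only [this, ite_and]
  by_cases h : v = v' <;>
    simp [h, ptrace₁, Matrix.kroneckerMap_apply, Matrix.one_apply, Finset.mul_sum]

theorem ptrace_pt {V : Type*} [Fintype V] (M : Matrix (V × B) (V × B) ℂ) :
    ptrace₁ (ptranspose₁ M) = ptrace₁ M := rfl

theorem ptr_add {V : Type*} [Fintype V] (M N : Matrix (V × B) (V × B) ℂ) :
    ptrace₁ (M + N) = ptrace₁ M + ptrace₁ N := by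
  ext; simp [ptrace₁, Finset.sum_add_distrib]
theorem ptr_smul {V : Type*} [Fintype V] (c : ℂ) (M : Matrix (V × B) (V × B) ℂ) :
    ptrace₁ (c • M) = c • ptrace₁ M := by
  ext; simp [ptrace₁, Finset.mul_sum]
theorem ptr_sum {V ι : Type*} [Fintype V] (s : Finset ι) (M : ι → Matrix (V × B) (V × B) ℂ) :
    ptrace₁ (∑ i ∈ s, M i) = ∑ i ∈ s, ptrace₁ (M i) := by
  ext; simp [ptrace₁, Matrix.sum_apply]; rw [Finset.sum_comm]
theorem ptr_kron {V : Type*} [Fintype V] (H : Matrix V V ℂ) (N : Matrix B B ℂ) :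
    ptrace₁ (H ⊗ₖ N) = H.trace • N := by
  ext; simp [ptrace₁, Matrix.kroneckerMap_apply, Matrix.trace, Finset.sum_mul]

theorem tele_sum (d : ℕ) (hd : 1 ≤ d) (ρ : Matrix (Fin d × B) (Fin d × B) ℂ)
    (H : Matrix (Fin d) (Fin d) ℂ) (hH : H.trace = 1) :
    ∑ a, teleA (bellPOVM d a) ρ H = ptrace₁ ρ := by
  have hd0 : (d : ℂ) ≠ 0 := by exact_mod_cast (by omega : d ≠ 0)
  simp only [tele_eq]
  rw [← ptr_sum, ← Finset.sum_mul, ← Finset.smul_sum, twirl_conj d hd, smul_smul,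
    inv_mul_cancel₀ hd0, one_smul, ← Matrix.mul_kronecker_mul, Matrix.one_mul, Matrix.mul_one,
    ptr_kron, hH, one_smul, ptrace_pt]

end Aux

/-- for a full Bell state measurement and tomographically complete inputs,
τ_r({σ_{a|ω_x}}) = ε_r(ρ^{AB}). -/
theorem tauR_eq_epsR {B X : Type*} [Fintype B] [DecidableEq B]
    (d : ℕ) (hd : 1 ≤ d)
    (ρ : Matrix (Fin d × B) (Fin d × B) ℂ) (hρ : IsState ρ)
    (ω : X → Matrix (Fin d) (Fin d) ℂ) (hω : ∀ x, IsState (ω x))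
    (htomo : TomoComplete ω) :
    tauR ω (fun (a : Fin d × Fin d) x => teleA (bellPOVM d a) ρ (ω x)) = epsR ρ := by
  have hd0 : (d : ℂ) ≠ 0 := by exact_mod_cast (by omega : d ≠ 0)
  have hdn : (0 : ℂ) ≤ (d : ℂ)⁻¹ := by
    rw [← Complex.ofReal_natCast, ← Complex.ofReal_inv]
    exact Complex.zero_le_real.2 (by positivity)
  have hU : ∀ a, HW d a * (HW d a)ᴴ = 1 := HW_unitary d hd
  have hU' : ∀ a, (HW d a)ᴴ * HW d a = 1 := fun a => mul_eq_one_comm.1 (hU a)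
  have key : ∀ (r q : ℝ) a x, (((1 + r : ℝ) : ℂ))⁻¹ •
        (teleA (bellPOVM d a) ρ (ω x) +
          ((r * q : ℝ) : ℂ) • ((Fintype.card B : ℂ)⁻¹ • (1 : Matrix B B ℂ))) =
      ptrace₁ (((((1 + r : ℝ) : ℂ))⁻¹ • ((d : ℂ)⁻¹ • conjA (HW d a) (ptranspose₁ ρ) +
        ((r * q : ℝ) : ℂ) • ((Fintype.card B : ℂ)⁻¹ • (1 : Matrix (Fin d × B) (Fin d × B) ℂ))))
          * (ω x ⊗ₖ (1 : Matrix B B ℂ))) := by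
    intro r q a x
    rw [tele_eq, Matrix.smul_mul (((1 + r : ℝ) : ℂ))⁻¹, ptr_smul, Matrix.add_mul, ptr_add]
    congr 2
    rw [smul_smul, smul_smul, Matrix.smul_mul, Matrix.one_mul, ptr_smul, ptr_kron, (hω x).2,
      one_smul]
  unfold tauR epsR
  congr 1
  ext r
  simp only [Set.mem_ofPred_eq]
  refine and_congr_right fun hr => ?_
  constructor
  · rintro ⟨p, Ms, -, hp1, hsep, hσ, -⟩
    have hMs : ∀ a, (((1 + r : ℝ) : ℂ))⁻¹ • ((d : ℂ)⁻¹ • conjA (HW d a) (ptranspose₁ ρ) +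
        ((r * p a : ℝ) : ℂ) •
          ((Fintype.card B : ℂ)⁻¹ • (1 : Matrix (Fin d × B) (Fin d × B) ℂ))) = Ms a := by
      intro a
      refine tomo_ext ω htomo _ _ fun x => ?_
      rw [← key, hσ]
    have h2 : ∀ a, Separable ((((1 + r : ℝ) : ℂ))⁻¹ • ((d : ℂ)⁻¹ • ρ +
        ((r * p a : ℝ) : ℂ) •
          ((Fintype.card B : ℂ)⁻¹ • (1 : Matrix (Fin d × B) (Fin d × B) ℂ)))) := by
      intro a
      have := sep_pt (sep_conj (HW d a)ᴴ (hsep a).2)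
      rw [← hMs a] at this
      simpa only [conjA_add, conjA_smul, conjA_conjA _ (hU' a), pt_add, pt_smul, pt_pt,
        conjA_one (HW d a)ᴴ (by simpa using hU' a), pt_one] using this
    have h3 := sep_smul hdn (sep_sum Finset.univ _ h2)
    convert h3 using 1
    rw [← Finset.smul_sum, Finset.sum_add_distrib,
      ← Finset.sum_smul (f := fun x => ((r * p x : ℝ) : ℂ)), ← Complex.ofReal_sum,
      ← Finset.mul_sum, hp1, mul_one, smul_comm (d : ℂ)⁻¹]
    congr 1
    rw [smul_add, Finset.sum_const, Finset.card_univ, Fintype.card_prod, Fintype.card_fin,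
      Fintype.card_prod, Fintype.card_fin]
    congr 1
    · rw [← Nat.cast_smul_eq_nsmul ℂ, smul_smul, smul_smul]
      have : (d : ℂ)⁻¹ * ((d * d : ℕ) : ℂ) * (d : ℂ)⁻¹ = 1 := by
        push_cast; field_simp
      rw [this, one_smul]
    · simp only [smul_smul]
      congr 1
      push_cast
      rw [mul_inv]; ring
  · intro hS
    refine ⟨fun _ => ((d : ℝ)⁻¹) * (d : ℝ)⁻¹, fun a => (d : ℂ)⁻¹ • conjA (HW d a)
        (ptranspose₁ ((((1 + r : ℝ) : ℂ))⁻¹ • (ρ + ((r : ℝ) : ℂ) •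
          ((Fintype.card (Fin d × B) : ℂ)⁻¹ • (1 : Matrix (Fin d × B) (Fin d × B) ℂ))))),
      fun _ => by positivity, ?_, fun a => ?_, fun a x => ?_, fun x => ?_⟩
    rotate_left
    · have :=
        sep_smul hdn (sep_conj (HW d a) (sep_pt hS))
      exact ⟨sep_psd this, this⟩
    · rw [key]
      congr 2
      simp only [conjA_add, conjA_smul, pt_add, pt_smul, pt_one, conjA_one _ (hU a)]
      rw [smul_comm (d : ℂ)⁻¹ (((1 + r : ℝ) : ℂ))⁻¹, smul_add (d : ℂ)⁻¹]
      congr 2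
      simp only [smul_smul]
      congr 1
      simp only [Fintype.card_prod, Fintype.card_fin]
      push_cast
      rw [mul_inv]; ring
    · rw [tele_sum d hd ρ _ (hω x).2, ← Finset.smul_sum, twirl_conj d hd, smul_smul,
        inv_mul_cancel₀ hd0, one_smul, ptrace_pt, ptr_smul, ptr_add, ptr_smul, ptr_smul]
      congr 3
      rw [← Matrix.one_kronecker_one, ptr_kron]
      simp only [Matrix.trace_one, smul_smul, Fintype.card_prod, Fintype.card_fin]
      congr 2
      push_cast
      rw [mul_inv]; field_simp
    · have : (d : ℝ) ≠ 0 := by exact_mod_cast (by omega : d ≠ 0)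
      simp [Fintype.card_prod]
      field_simp

end Tele
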